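/- Fix t with a+2 ≤ t ≤ b. Then the right-focal Green's function is increasing in its second argument below the diagonal and constant above it: G_r(t, s−1) < G_r(t, s) for every s with a+3 ≤ s ≤ t; if t < b then G_r(t, t) < G_r(t, t+1); and G_r(t, s) = rf(t−a−1, α−1)/Γ(α) for every s with t+1 ≤ s ≤ b. -/

import Mathlib

/-- Rising factorial `rf x r = Γ(x+r)/Γ(x)`, with the convention `rf 0 r = 0`. -/
noncomputable def rf (x r : ℝ) : ℝ := if x = 0 then 0 else Real.Gamma (x + r) / Real.Gamma x

/-- The right-focal Green's function. -/
noncomputable def Gr (a : ℤ) (α : ℝ) (t s : ℤ) : ℝ :=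
  if t ≤ s - 1 then
    (1 / Real.Gamma α) * rf (t - a - 1 : ℝ) (α - 1)
  else
    (1 / Real.Gamma α) * (rf (t - a - 1 : ℝ) (α - 1) - rf (t - s + 1 : ℝ) (α - 1))

theorem rf_pos_aux (x r : ℝ) (hx : 0 < x) (hr : 0 < r) : 0 < rf x r := by
  unfold rf
  rw [if_neg hx.ne']
  exact div_pos (Real.Gamma_pos_of_pos (by linarith)) (Real.Gamma_pos_of_pos hx)

theorem rf_lt_aux (x r : ℝ) (hx : 0 < x) (hr : 0 < r) : rf x r < rf (x + 1) r := by
  have h := rf_pos_aux x r hx hr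
  have hg := Real.Gamma_pos_of_pos hx
  have key : rf (x + 1) r = (x + r) / x * rf x r := by
    unfold rf
    rw [if_neg hx.ne', if_neg (by linarith : x + 1 ≠ 0), add_right_comm,
      Real.Gamma_add_one (by linarith : x + r ≠ 0), Real.Gamma_add_one hx.ne']
    field_simp
  rw [key]
  have h1 : 1 < (x + r) / x := by
    rw [lt_div_iff₀ hx]
    linarith
  nlinarith

theorem right_focal_green_monotone (a b : ℤ) (hab : 2 ≤ b - a) (α : ℝ)
    (hα1 : 1 < α) (hα2 : α < 2) (t : ℤ) (ht1 : a + 2 ≤ t) (ht2 : t ≤ b) :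
    (∀ s : ℤ, a + 3 ≤ s → s ≤ t → Gr a α t (s - 1) < Gr a α t s) ∧
    (t < b → Gr a α t t < Gr a α t (t + 1)) ∧
    (∀ s : ℤ, t + 1 ≤ s → s ≤ b →
      Gr a α t s = rf (t - a - 1 : ℝ) (α - 1) / Real.Gamma α) := by
  have hG : 0 < 1 / Real.Gamma α := one_div_pos.mpr (Real.Gamma_pos_of_pos (by linarith))
  refine ⟨?_, ?_, ?_⟩
  · intro s hs1 hs2
    unfold Gr
    rw [if_neg (by omega), if_neg (by omega)]
    apply mul_lt_mul_of_pos_left _ hG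
    have hst : (s : ℝ) ≤ t := by exact_mod_cast hs2
    have h := rf_lt_aux (t - s + 1 : ℝ) (α - 1) (by linarith) (by linarith)
    have e : (t - ((s - 1 : ℤ) : ℝ) + 1 : ℝ) = t - s + 1 + 1 := by
      push_cast
      ring
    rw [e]
    linarith
  · intro _
    unfold Gr
    rw [if_neg (by omega), if_pos (by omega)]
    apply mul_lt_mul_of_pos_left _ hG
    have h := rf_pos_aux (t - t + 1 : ℝ) (α - 1) (by linarith) (by linarith)
    linarith
  · intro s hs1 _
    unfold Gr
    rw [if_pos (by omega)]
    ring
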